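/- Let D_1 and D_2 be two vertex-disjoint digraphs with Hamiltonian cycles C_1 = (x_0, x_1, …, x_{n−1}, x_0) and C_2 = (y_0, y_1, …, y_{m−1}, y_0) respectively, and let D ∈ D_1 ⊕ D_2. If D is strong and contains no good pair of arcs between C_1 and C_2, then D is vertex-pancyclic. -/

import Mathlib

/-!
Let `n`, `m` be the lengths of the two Hamiltonian cycles; both are at least `2`. Absence of a good
pair says that `x_s → y_r` implies `x_{s+1} → y_{r-1}`. The shift `(1, -1)` of `ℤ/n × ℤ/m` has finite
order, so this implication is an equivalence and the direction of the arc between `x_s` and `y_r`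
depends only on `s + r` (`diag_iff`): there is a predicate `F` on `ℤ`, periodic modulo both `n` and
`m`, with `x_s → y_r` iff `F (s + r)`, and `y_r → x_s` otherwise. Since `D` is strong, `F` is not
constant. These data are recorded in `SumPattern`.

Two families of cycles suffice (`SumPattern.exists_cycle`). The cycle
`x_s, …, x_{s+p}, y_r, …, y_{r+q}` has length `p + q + 2` and exists when `F (t + p)` and
`¬ F (t + q)`, where `t = s + r`. If no admissible `p`, `q` and `t` work for a length `k < n + m`, two
consecutive choices of `p` show that `F` has period `2`, so it alternates and `n`, `m`, `k` are even;
then a cycle alternating twice between the two sides,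
`x_s, y_r, …, y_{r+q}, x_{s+1}, …, x_{s+1+p}, y_{r+q+1}, …, y_{r+q+1+w}`, has length `k` for `q = 0`
and suitable even `p`, `w`. For `k = n + m` the same shape works, with `t` the beginning of a run of
`F` and `q + 1` the length of that run. As only `t = s + r` is prescribed, either `s` or `r` may be
chosen freely, so the cycles can be made to pass through any given vertex.
-/

/-- A digraph: a finite vertex set together with an irreflexive arc relation
whose arcs join vertices of the digraph. -/
structure FinDigraph (α : Type) [DecidableEq α] where
  verts : Finset α
  Arc : α → α → Prop
  arc_mem_left : ∀ {u v : α}, Arc u v → u ∈ verts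
  arc_mem_right : ∀ {u v : α}, Arc u v → v ∈ verts
  arc_irrefl : ∀ v : α, ¬ Arc v v

namespace FinDigraph

variable {α : Type} [DecidableEq α]

/-- `c` lists, in cyclic order, the vertices of a directed cycle of length `l` in `D`. -/
def CycleOn (D : FinDigraph α) {l : ℕ} (c : ZMod l → α) : Prop :=
  Function.Injective c ∧ ∀ i : ZMod l, D.Arc (c i) (c (i + 1))

/-- `D` contains a directed cycle of length `l`. -/
def HasCycle (D : FinDigraph α) (l : ℕ) : Prop :=
  ∃ c : ZMod l → α, D.CycleOn c

/-- `D` contains a directed cycle of length `l` passing through `v`. -/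
def HasCycleThrough (D : FinDigraph α) (l : ℕ) (v : α) : Prop :=
  ∃ c : ZMod l → α, D.CycleOn c ∧ ∃ i : ZMod l, c i = v

/-- `c` is a Hamiltonian cycle of `D`. -/
def IsHamCycle (D : FinDigraph α) {l : ℕ} (c : ZMod l → α) : Prop :=
  D.CycleOn c ∧ ∀ v ∈ D.verts, ∃ i : ZMod l, c i = v

/-- `D` contains a directed cycle through all of its vertices. -/
def Hamiltonian (D : FinDigraph α) : Prop :=
  ∃ c : ZMod D.verts.card → α, D.IsHamCycle c

/-- For every ordered pair of vertices `u`, `v` there is a directed path from `u` to `v`. -/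
def Strong (D : FinDigraph α) : Prop :=
  ∀ u ∈ D.verts, ∀ v ∈ D.verts, Relation.ReflTransGen D.Arc u v

/-- `D` (of order at least 3) has directed cycles of every length from 3 to its order. -/
def Pancyclic (D : FinDigraph α) : Prop :=
  3 ≤ D.verts.card ∧ ∀ l : ℕ, 3 ≤ l → l ≤ D.verts.card → D.HasCycle l

/-- Every vertex of `D` lies on directed cycles of every length from 3 to the order of `D`. -/
def VertexPancyclic (D : FinDigraph α) : Prop :=
  3 ≤ D.verts.card ∧
    ∀ v ∈ D.verts, ∀ l : ℕ, 3 ≤ l → l ≤ D.verts.card → D.HasCycleThrough l v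

/-- `D` is a generalized sum of the two vertex-disjoint digraphs `D1` and `D2`:
its vertex set is the union of theirs, it induces each of them, and between any two
vertices of different summands there is exactly one arc. -/
def GenSum2 (D1 D2 D : FinDigraph α) : Prop :=
  D.verts = D1.verts ∪ D2.verts ∧
  (∀ u v : α, u ∈ D1.verts → v ∈ D1.verts → (D.Arc u v ↔ D1.Arc u v)) ∧
  (∀ u v : α, u ∈ D2.verts → v ∈ D2.verts → (D.Arc u v ↔ D2.Arc u v)) ∧
  (∀ u v : α, u ∈ D1.verts → v ∈ D2.verts → Xor' (D.Arc u v) (D.Arc v u))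

/-- `D` is a generalized sum of the pairwise vertex-disjoint digraphs `Ds i`. -/
def GenSum {k : ℕ} (Ds : Fin k → FinDigraph α) (D : FinDigraph α) : Prop :=
  D.verts = Finset.univ.biUnion (fun i => (Ds i).verts) ∧
  (∀ i : Fin k, ∀ u v : α, u ∈ (Ds i).verts → v ∈ (Ds i).verts →
    (D.Arc u v ↔ (Ds i).Arc u v)) ∧
  (∀ i j : Fin k, i ≠ j → ∀ u v : α, u ∈ (Ds i).verts → v ∈ (Ds j).verts →
    Xor' (D.Arc u v) (D.Arc v u))

end FinDigraph

open FinDigraph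

/-- There is a good pair of arcs `x_s → y_r`, `y_{r-1} → x_{s+1}` between the two
cycles listed by `x` and `y`. -/
def GoodPair {α : Type} [DecidableEq α] (D : FinDigraph α) {n m : ℕ}
    (x : ZMod n → α) (y : ZMod m → α) : Prop :=
  ∃ (s : ZMod n) (r : ZMod m), D.Arc (x s) (y r) ∧ D.Arc (y (r - 1)) (x (s + 1))

/-! ### Cycles from lists -/

/-- Cycles presented as duplicate-free lists; the index type `ZMod k` is unfolded to `Fin k`. -/
theorem FinDigraph.hasCycleThrough_of_list {α : Type} [DecidableEq α] (D : FinDigraph α)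
    (L : List α) (hnd : L.Nodup)
    (hch : L.IsChain D.Arc) (hcl : ∀ a ∈ L.getLast?, ∀ b ∈ L.head?, D.Arc a b)
    {k : ℕ} (hk : L.length = k) {v : α} (hv : v ∈ L) : D.HasCycleThrough k v := by
  subst hk
  obtain ⟨k, hk⟩ : ∃ k, L.length = k + 1 :=
    Nat.exists_eq_succ_of_ne_zero (List.length_pos_of_mem hv).ne'
  rw [hk]
  refine ⟨fun i : Fin (k + 1) => L[i.val]'(by omega), ⟨?_, ?_⟩, ?_⟩
  · intro i j hij
    exact Fin.ext ((hnd.getElem_inj_iff).1 hij)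
  · have key : ∀ (a b : ℕ) (ha : a < L.length) (hb : b < L.length),
        (b = if a = k then 0 else a + 1) → D.Arc L[a] L[b] := by
      rintro a b ha hb rfl
      split_ifs with h
      · subst h
        apply hcl
        · simp [List.getLast?_eq_getElem?, hk]
        · simp [List.head?_eq_getElem?, hk]
      · exact List.isChain_iff_getElem.1 hch a (by omega)
    have succ_val : ∀ i : Fin (k + 1), (i + 1).val = if i.val = k then 0 else i.val + 1 := by
      intro i
      simp only [Fin.val_add_one, Fin.ext_iff, Fin.val_last]
    intro i
    exact key _ _ _ _ (succ_val i)
  · obtain ⟨i, hi, rfl⟩ := List.getElem_of_mem hv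
    exact ⟨(⟨i, by omega⟩ : Fin (k + 1)), rfl⟩

/-- The list `X a, X (a + 1), …, X (a + p)` of `p + 1` consecutive terms of `X`. -/
def seg {α : Type} (X : ℤ → α) (a : ℤ) (p : ℕ) : List α :=
  (List.range (p + 1)).map fun i : ℕ => X (a + i)

theorem mem_seg {α : Type} {X : ℤ → α} {a : ℤ} {p : ℕ} {v : α} :
    v ∈ seg X a p ↔ ∃ i : ℤ, a ≤ i ∧ i ≤ a + p ∧ X i = v := by
  simp only [seg, List.mem_map, List.mem_range]
  constructor
  · rintro ⟨i, hi, rfl⟩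
    exact ⟨a + i, by omega, by omega, rfl⟩
  · rintro ⟨i, h1, h2, rfl⟩
    exact ⟨(i - a).toNat, by omega, by congr 1; omega⟩

theorem length_seg {α : Type} (X : ℤ → α) (a : ℤ) (p : ℕ) : (seg X a p).length = p + 1 := by
  simp [seg]

theorem head?_seg {α : Type} (X : ℤ → α) (a : ℤ) (p : ℕ) : (seg X a p).head? = some (X a) := by
  simp [seg, List.head?_eq_getElem?]

theorem getLast?_seg {α : Type} (X : ℤ → α) (a : ℤ) (p : ℕ) :
    (seg X a p).getLast? = some (X (a + p)) := by
  simp [seg, List.getLast?_eq_getElem?]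

theorem isChain_seg {α : Type} {R : α → α → Prop} {X : ℤ → α} (h : ∀ i, R (X i) (X (i + 1)))
    (a : ℤ) (p : ℕ) : (seg X a p).IsChain R := by
  rw [seg, List.isChain_map, List.isChain_range_succ]
  intro i _
  simpa [add_assoc] using h (a + i)

theorem nodup_seg {α : Type} {X : ℤ → α} {n : ℕ}
    (h : ∀ i j, X i = X j → i < j + n → j < i + n → i = j)
    (a : ℤ) {p : ℕ} (hp : p < n) : (seg X a p).Nodup := by
  refine List.Nodup.map_on ?_ List.nodup_range
  intro i hi j hj hij
  rw [List.mem_range] at hi hj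
  have := h _ _ hij (by omega) (by omega)
  omega

/-! ### Two cycles joined by a diagonal pattern of arcs -/

/-- Two vertex-disjoint cycles of `D`, of lengths `n` and `m`, listed periodically by `X` and `Y`
along `ℤ`, such that the arc between `X s` and `Y r` is directed towards `Y` exactly when
`F (s + r)` holds. -/
structure SumPattern {α : Type} [DecidableEq α] (D : FinDigraph α) (n m : ℕ)
    (X Y : ℤ → α) (F : ℤ → Prop) : Prop where
  X_inj : ∀ i j, X i = X j → i < j + n → j < i + n → i = j
  Y_inj : ∀ i j, Y i = Y j → i < j + m → j < i + m → i = j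
  X_ne_Y : ∀ i j, X i ≠ Y j
  X_arc : ∀ i, D.Arc (X i) (X (i + 1))
  Y_arc : ∀ i, D.Arc (Y i) (Y (i + 1))
  arc_XY : ∀ s r, F (s + r) → D.Arc (X s) (Y r)
  arc_YX : ∀ s r, ¬ F (s + r) → D.Arc (Y r) (X s)
  F_add_n : ∀ t, F (t + n) ↔ F t
  F_add_m : ∀ t, F (t + m) ↔ F t

/-- The cycle `X s, …, X (s + p), Y r, …, Y (r + q)`. -/
theorem SumPattern.cycle_two {α : Type} [DecidableEq α] {D : FinDigraph α} {n m : ℕ}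
    {X Y : ℤ → α} {F : ℤ → Prop} (h : SumPattern D n m X Y F) {p q : ℕ} (hp : p < n) (hq : q < m)
    (s r : ℤ) (h1 : F (s + r + p)) (h2 : ¬ F (s + r + q)) {v : α} (hv : v = X s ∨ v = Y r)
    {k : ℕ} (hk : p + q + 2 = k) : D.HasCycleThrough k v := by
  apply D.hasCycleThrough_of_list (seg X s p ++ seg Y r q)
  · rw [List.nodup_append]
    refine ⟨nodup_seg h.X_inj s hp, nodup_seg h.Y_inj r hq, ?_⟩
    intro a ha b hb
    obtain ⟨i, -, -, rfl⟩ := mem_seg.1 ha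
    obtain ⟨j, -, -, rfl⟩ := mem_seg.1 hb
    exact h.X_ne_Y i j
  · rw [List.isChain_append]
    refine ⟨isChain_seg h.X_arc _ _, isChain_seg h.Y_arc _ _, ?_⟩
    simp only [getLast?_seg, head?_seg, Option.mem_some_iff]
    rintro _ rfl _ rfl
    exact h.arc_XY _ _ (by convert h1 using 1; ring)
  · simp only [List.getLast?_append, List.head?_append, getLast?_seg, head?_seg, Option.mem_def,
      Option.some_or, Option.some.injEq]
    rintro _ rfl _ rfl
    exact h.arc_YX _ _ (by convert h2 using 2; ring)
  · simp only [List.length_append, length_seg]; omega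
  · rw [List.mem_append, mem_seg, mem_seg]
    rcases hv with rfl | rfl
    · exact Or.inl ⟨s, by omega, by omega, rfl⟩
    · exact Or.inr ⟨r, by omega, by omega, rfl⟩

/-- The cycle `X s, Y r, …, Y (r + q), X (s + 1), …, X (s + 1 + p), Y (r + q + 1), …,
Y (r + q + 1 + w)`. -/
theorem SumPattern.cycle_four {α : Type} [DecidableEq α] {D : FinDigraph α} {n m : ℕ}
    {X Y : ℤ → α} {F : ℤ → Prop} (h : SumPattern D n m X Y F) {p q w : ℕ} (hp : p + 2 ≤ n)
    (hq : q + w + 2 ≤ m) (s r : ℤ) (h1 : F (s + r)) (h2 : ¬ F (s + r + q + 1))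
    (h3 : F (s + r + p + q + 2)) (h4 : ¬ F (s + r + q + w + 1)) {v : α} (hv : v = X s ∨ v = Y r)
    {k : ℕ} (hk : p + q + w + 4 = k) : D.HasCycleThrough k v := by
  apply D.hasCycleThrough_of_list
    (seg X s 0 ++ (seg Y r q ++ (seg X (s + 1) p ++ seg Y (r + q + 1) w)))
  · simp only [List.nodup_append, List.mem_append]
    refine ⟨nodup_seg h.X_inj _ (by omega), ⟨nodup_seg h.Y_inj _ (by omega),
      ⟨nodup_seg h.X_inj _ (by omega), nodup_seg h.Y_inj _ (by omega), ?_⟩, ?_⟩, ?_⟩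
    · intro a ha b hb
      obtain ⟨i, -, -, rfl⟩ := mem_seg.1 ha
      obtain ⟨j, -, -, rfl⟩ := mem_seg.1 hb
      exact h.X_ne_Y i j
    · rintro a ha b (hb | hb)
      · obtain ⟨i, -, -, rfl⟩ := mem_seg.1 ha
        obtain ⟨j, -, -, rfl⟩ := mem_seg.1 hb
        exact (h.X_ne_Y j i).symm
      · obtain ⟨i, hi, hi', rfl⟩ := mem_seg.1 ha
        obtain ⟨j, hj, hj', rfl⟩ := mem_seg.1 hb
        intro e
        have := h.Y_inj _ _ e (by omega) (by omega)
        omega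
    · rintro a ha b (hb | hb | hb)
      · obtain ⟨i, -, -, rfl⟩ := mem_seg.1 ha
        obtain ⟨j, -, -, rfl⟩ := mem_seg.1 hb
        exact h.X_ne_Y i j
      · obtain ⟨i, hi, hi', rfl⟩ := mem_seg.1 ha
        obtain ⟨j, hj, hj', rfl⟩ := mem_seg.1 hb
        intro e
        have := h.X_inj _ _ e (by omega) (by omega)
        omega
      · obtain ⟨i, -, -, rfl⟩ := mem_seg.1 ha
        obtain ⟨j, -, -, rfl⟩ := mem_seg.1 hb
        exact h.X_ne_Y i j
  · simp only [List.isChain_append, List.head?_append, getLast?_seg, head?_seg, Option.mem_def,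
      Option.some_or, Option.some.injEq]
    refine ⟨isChain_seg h.X_arc _ _, ⟨isChain_seg h.Y_arc _ _, ⟨isChain_seg h.X_arc _ _,
      isChain_seg h.Y_arc _ _, ?_⟩, ?_⟩, ?_⟩
    · rintro _ rfl _ rfl
      exact h.arc_XY _ _ (by convert h3 using 1; ring)
    · rintro _ rfl _ rfl
      exact h.arc_YX _ _ (by convert h2 using 2; ring)
    · rintro _ rfl _ rfl
      exact h.arc_XY _ _ (by convert h1 using 1; simp)
  · simp only [List.getLast?_append, List.head?_append, getLast?_seg, head?_seg, Option.mem_def,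
      Option.some_or, Option.some.injEq]
    rintro _ rfl _ rfl
    exact h.arc_YX _ _ (by convert h4 using 2; ring)
  · simp only [List.length_append, length_seg]; omega
  · simp only [List.mem_append, mem_seg]
    rcases hv with rfl | rfl
    · exact Or.inl ⟨s, by omega, by omega, rfl⟩
    · exact Or.inr (Or.inl ⟨r, by omega, by omega, rfl⟩)

/-! ### Periodic predicates on the integers -/

/-- A change of value from `false` to `true`; it exists because `F` is periodic and not constant. -/
theorem exists_rise {F : ℤ → Prop} {n : ℕ} (hn : 0 < n) (hper : ∀ t, F (t + n) ↔ F t)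
    (hT : ∃ t, F t) (hF : ∃ t, ¬ F t) : ∃ c, ¬ F c ∧ F (c + 1) := by
  by_contra! hc
  obtain ⟨a, ha⟩ := hF
  obtain ⟨b, hb⟩ := hT
  have key : ∀ i : ℕ, ¬ F (a + i) := by
    intro i
    induction i with
    | zero => simpa using ha
    | succ i ih => simpa [add_assoc] using hc _ ih
  have per : ∀ j : ℕ, F (b + j * n) := by
    intro j
    induction j with
    | zero => simpa using hb
    | succ j ih =>
      have := (hper _).2 ih
      convert this using 1
      push_cast; ring
  have hle : a ≤ b + (a - b).toNat * n := by
    have h1 : (a - b) ≤ (a - b).toNat := Int.self_le_toNat _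
    have h2 : ((a - b).toNat : ℤ) * 1 ≤ (a - b).toNat * n := by gcongr; omega
    linarith
  obtain ⟨i, hi⟩ := Int.le.dest hle
  exact key i (hi ▸ per _)

/-- If `F` is preserved by the shift by `g`, it is also preserved by the shift by `-g`, since
`-g ≡ (n - 1) g` modulo the period `n`. -/
theorem shift_iff {F : ℤ → Prop} {n : ℕ} (hn : 0 < n) (hper : ∀ t, F (t + n) ↔ F t) {g : ℤ}
    (hg : ∀ u, F u → F (u + g)) (u : ℤ) : F (u + g) ↔ F u := by
  refine ⟨fun h => ?_, hg u⟩
  have it : ∀ j : ℕ, F (u + g + j * g) := by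
    intro j
    induction j with
    | zero => simpa using h
    | succ j ih =>
      convert hg _ ih using 1
      push_cast; ring
  have hp : Function.Periodic F (n : ℤ) := fun t => propext (hper t)
  have h1 := it (n - 1)
  have e : u + g + ((n - 1 : ℕ) : ℤ) * g = u + g * n := by
    push_cast [Nat.cast_sub (show 1 ≤ n from hn)]; ring
  rw [e] at h1
  have h2 : F (u + g * n) = F u := by simpa using hp.int_mul g u
  rwa [h2] at h1

/-! ### Cycles of all lengths -/

/-- Given a length `k` with `3 ≤ k ≤ n + m`, cycles of length `k` pass through all vertices
`X s` and `Y r` with `s + r` equal to one suitable value `t`; since either of `s` and `r` is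
arbitrary, this covers every vertex. -/
theorem SumPattern.exists_cycle {α : Type} [DecidableEq α] {D : FinDigraph α} {n m : ℕ}
    {X Y : ℤ → α} {F : ℤ → Prop} (h : SumPattern D n m X Y F) (hn : 2 ≤ n) (hm : 2 ≤ m)
    (hT : ∃ t, F t) (hF : ∃ t, ¬ F t) {k : ℕ} (hk3 : 3 ≤ k) (hk : k ≤ n + m) :
    ∃ t, ∀ s r, s + r = t → ∀ v, v = X s ∨ v = Y r → D.HasCycleThrough k v := by
  by_cases hA : ∃ p q : ℕ, p < n ∧ q < m ∧ p + q + 2 = k ∧ ∃ t : ℤ, F (t + p) ∧ ¬ F (t + q)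
  · obtain ⟨p, q, hp, hq, hpq, t, h1, h2⟩ := hA
    refine ⟨t, ?_⟩
    rintro s r rfl v hv
    exact h.cycle_two hp hq s r h1 h2 hv hpq
  push Not at hA
  obtain ⟨c, hc0, hc1⟩ := exists_rise (by omega) h.F_add_n hT hF
  refine ⟨c + 1, ?_⟩
  intro s r hsr v hv
  by_cases hkn : k = n + m
  · -- `q` is chosen so that the run of `F` starting at `c + 1` ends at `c + 1 + q`.
    obtain ⟨q, hq, hq1, hq2⟩ :
        ∃ q : ℕ, q + 2 ≤ m ∧ F (c + 1 + q) ∧ ¬ F (c + 1 + q + 1) := by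
      have hex : ∃ q : ℕ, ¬ F (c + 1 + q + 1) := by
        refine ⟨m - 2, fun hcon => hc0 ((h.F_add_m c).1 ?_)⟩
        convert hcon using 1
        omega
      classical
      refine ⟨Nat.find hex, ?_, ?_, Nat.find_spec hex⟩
      · have : Nat.find hex ≤ m - 2 := by
          refine Nat.find_min' hex fun hcon => hc0 ((h.F_add_m c).1 ?_)
          convert hcon using 1
          omega
        omega
      · rcases hz : Nat.find hex with _ | i
        · simpa using hc1
        · have := Nat.find_min hex (m := i) (by omega)
          rw [not_not] at this
          convert this using 1
          push_cast; ring
    refine h.cycle_four (p := n - 2) (q := q) (w := m - 2 - q) (by omega) (by omega) s r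
      ?_ ?_ ?_ ?_ hv (by omega)
    · rwa [hsr]
    · rwa [hsr]
    · convert (h.F_add_n _).2 hq1 using 1
      omega
    · convert mt (h.F_add_m _).1 hc0 using 2
      omega
  · -- The two-segment cycles with `(p, q + 1)` and `(p + 1, q)` both fail, so `F` is invariant
    -- under two shifts differing by `2`; being nonconstant, it then alternates.
    obtain ⟨p, q, hp, hq, hpq⟩ : ∃ p q : ℕ, p + 1 < n ∧ q + 1 < m ∧ p + q + 3 = k :=
      ⟨k - 2 - (m - 1), k - 3 - (k - 2 - (m - 1)), by omega, by omega, by omega⟩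
    have hg1 : ∀ u, F (u + (q + 1 - p)) ↔ F u := by
      refine shift_iff (by omega) h.F_add_n fun u hu => ?_
      have := hA p (q + 1) (by omega) (by omega) (by omega) (u - p) (by convert hu using 1; ring)
      convert this using 1
      push_cast; ring
    have hg2 : ∀ u, F (u + (q - p - 1)) ↔ F u := by
      refine shift_iff (by omega) h.F_add_n fun u hu => ?_
      have := hA (p + 1) q (by omega) (by omega) (by omega) (u - p - 1)
        (by convert hu using 1; push_cast; ring)
      convert this using 1
      ring
    have h2 : Function.Periodic F 2 := by
      intro u
      rw [← propext (hg2 (u + 2)), ← propext (hg1 u)]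
      congr 1; ring
    have hodd : ∀ t, F (c + t) ↔ Odd t := by
      intro t
      rcases Int.even_or_odd' t with ⟨i, rfl | rfl⟩
      · have e : F (c + 2 * i) = F c := by simpa [mul_comm] using h2.int_mul i c
        rw [e]
        simp [hc0]
      · have e : F (c + 1 + 2 * i) = F (c + 1) := by simpa [mul_comm] using h2.int_mul i (c + 1)
        rw [show c + (2 * i + 1) = c + 1 + 2 * i by ring, e]
        simp [hc1]
    have en : ¬ Odd (n : ℤ) := fun ho => hc0 ((h.F_add_n c).1 ((hodd _).2 ho))
    have em : ¬ Odd (m : ℤ) := fun ho => hc0 ((h.F_add_m c).1 ((hodd _).2 ho))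
    have eg : ¬ Odd ((q : ℤ) + 1 - p) := fun ho => hc0 ((hg1 c).1 ((hodd _).2 ho))
    rw [Int.not_odd_iff] at en em eg
    refine h.cycle_four (p := min (k - 4) (n - 2)) (q := 0) (w := k - 4 - min (k - 4) (n - 2))
      (by omega) (by omega) s r ?_ ?_ ?_ ?_ hv (by omega)
    · rwa [hsr]
    · rw [hsr, add_assoc, add_assoc, hodd, Int.not_odd_iff]; omega
    · rw [hsr, add_assoc, add_assoc, add_assoc, hodd, Int.odd_iff]; omega
    · rw [hsr, add_assoc, add_assoc, add_assoc, hodd, Int.not_odd_iff]; omega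

/-! ### Reduction to a diagonal pattern -/

/-- Length `0` is excluded because `ZMod 0 = ℤ` is infinite, length `1` because `D` has no loops. -/
theorem two_le_of_cycleOn {α : Type} [DecidableEq α] {D : FinDigraph α} {n : ℕ} {x : ZMod n → α}
    (hx : D.CycleOn x) : 2 ≤ n := by
  match n, x, hx with
  | 0, x, hx =>
    exfalso
    have : Finite (Set.range x) := Set.Finite.to_subtype <|
      D.verts.finite_toSet.subset (by rintro _ ⟨i, rfl⟩; exact D.arc_mem_left (hx.2 i))
    have : Finite ℤ := @Finite.of_injective_finite_range _ _ x hx.1 this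
    exact not_finite ℤ
  | 1, x, hx =>
    have := hx.2 0
    rw [Subsingleton.elim (0 + 1 : ZMod 1) 0] at this
    exact absurd this (D.arc_irrefl _)
  | n + 2, _, _ => omega

theorem card_verts {α : Type} [DecidableEq α] {D : FinDigraph α} {n : ℕ} {x : ZMod n → α}
    (hx : D.IsHamCycle x) : D.verts.card = n := by
  have : NeZero n := ⟨by have := two_le_of_cycleOn hx.1; omega⟩
  have : D.verts = Finset.univ.image x := by
    ext v
    simp only [Finset.mem_image, Finset.mem_univ, true_and]
    exact ⟨hx.2 v, by rintro ⟨i, rfl⟩; exact D.arc_mem_left (hx.1.2 i)⟩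
  rw [this, Finset.card_image_of_injective _ hx.1.1, Finset.card_univ, ZMod.card]

theorem zmod_cast_inj {α : Type} {n : ℕ} {x : ZMod n → α} (hx : Function.Injective x) (i j : ℤ)
    (h : x i = x j) (h1 : i < j + n) (h2 : j < i + n) : i = j := by
  have h := (ZMod.intCast_eq_intCast_iff_dvd_sub _ _ _).1 (hx h)
  have := Int.eq_zero_of_abs_lt_dvd h (by rw [abs_lt]; constructor <;> omega)
  omega

/-- A relation on the torus `ℤ/n × ℤ/m` that is preserved by the shift `(1, -1)` depends only on
`s + r`: the shift has finite order, so it preserves the relation in both directions. -/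
theorem diag_iff {n m : ℕ} (hn : 0 < n) (hm : 0 < m) {A : ZMod n → ZMod m → Prop}
    (hA : ∀ s r, A s r → A (s + 1) (r - 1)) (s r : ℤ) :
    A s r ↔ A 0 ((s + r : ℤ) : ZMod m) := by
  have fwd : ∀ (j : ℕ) s r, A s r → A (s + j) (r - j) := by
    intro j
    induction j with
    | zero => intro s r h; simpa using h
    | succ j ih =>
      intro s r h
      convert hA _ _ (ih s r h) using 1 <;> push_cast <;> ring
  -- For a shift by `j ≥ 0` a further shift by `j * (n * m - 1)` returns to the start.
  have iff : ∀ (j : ℕ) s r, A (s + j) (r - j) ↔ A s r := by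
    refine fun j s r => ⟨fun h => ?_, fwd j s r⟩
    have := fwd (j * (n * m - 1)) _ _ h
    have e : j + j * (n * m - 1) = j * (n * m) := by
      rw [Nat.mul_sub, mul_one]
      have := Nat.le_mul_of_pos_right j (Nat.mul_pos hn hm)
      omega
    rw [add_assoc, sub_sub, ← Nat.cast_add, ← Nat.cast_add, e] at this
    simpa using this
  obtain ⟨j, rfl | rfl⟩ := s.eq_nat_or_neg
  · rw [← iff j 0]
    simp
  · rw [← iff j]
    simp [sub_eq_neg_add]

theorem stmt_10 {α : Type} [DecidableEq α]
    (D1 D2 D : FinDigraph α) {n m : ℕ}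
    (x : ZMod n → α) (y : ZMod m → α)
    (hx : D1.IsHamCycle x) (hy : D2.IsHamCycle y)
    (hdisj : Disjoint D1.verts D2.verts)
    (hD : GenSum2 D1 D2 D) (hstrong : D.Strong)
    (hng : ¬ GoodPair D x y) :
    D.VertexPancyclic := by
  obtain ⟨hV, hA1, hA2, hX⟩ := hD
  have hn := two_le_of_cycleOn hx.1
  have hm := two_le_of_cycleOn hy.1
  have hcard : D.verts.card = n + m := by
    rw [hV, Finset.card_union_of_disjoint hdisj, card_verts hx, card_verts hy]
  have x_mem : ∀ i, x i ∈ D1.verts := fun i => D1.arc_mem_left (hx.1.2 i)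
  have y_mem : ∀ i, y i ∈ D2.verts := fun i => D2.arc_mem_left (hy.1.2 i)
  have arc_or : ∀ i j, D.Arc (x i) (y j) ∨ D.Arc (y j) (x i) :=
    fun i j => (hX _ _ (x_mem i) (y_mem j)).imp And.left And.left
  have diag : ∀ s r : ℤ, D.Arc (x s) (y r) ↔ D.Arc (x 0) (y (s + r : ℤ)) :=
    diag_iff (A := fun i j => D.Arc (x i) (y j)) (by omega) (by omega) fun i j hij =>
      (arc_or _ _).resolve_right fun hji => hng ⟨i, j, hij, hji⟩
  let F : ℤ → Prop := fun t => D.Arc (x 0) (y t)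
  have hP : SumPattern D n m (fun i => x i) (fun i => y i) F :=
    { X_inj := zmod_cast_inj hx.1.1
      Y_inj := zmod_cast_inj hy.1.1
      X_ne_Y := fun i j => Finset.disjoint_left.1 hdisj (x_mem i) |> fun h e => h (e ▸ y_mem j)
      X_arc := fun i => by
        push_cast
        exact (hA1 _ _ (x_mem _) (x_mem _)).2 (hx.1.2 i)
      Y_arc := fun i => by
        push_cast
        exact (hA2 _ _ (y_mem _) (y_mem _)).2 (hy.1.2 i)
      arc_XY := fun s r h => (diag s r).2 h
      arc_YX := fun s r h => (arc_or _ _).resolve_left fun h' => h ((diag s r).1 h')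
      F_add_n := fun t => by
        have := diag n t
        rw [add_comm (n : ℤ)] at this
        simpa [F] using this.symm
      F_add_m := fun t => by simp [F] }
  -- A constant pattern would leave no arc from one side to the other.
  have hT : ∃ t, F t := by
    by_contra! hc
    have : ∀ v, Relation.ReflTransGen D.Arc (x 0) v → v ∈ D1.verts := by
      intro v hv
      induction hv with
      | refl => exact x_mem 0
      | @tail b c _ hbc ih =>
        have hcV := D.arc_mem_right hbc
        rw [hV, Finset.mem_union] at hcV
        refine hcV.resolve_right fun hc2 => ?_
        obtain ⟨i, rfl⟩ := hx.2 _ ih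
        obtain ⟨j, rfl⟩ := hy.2 _ hc2
        obtain ⟨i, rfl⟩ := ZMod.intCast_surjective i
        obtain ⟨j, rfl⟩ := ZMod.intCast_surjective j
        exact hc _ ((diag i j).1 hbc)
    exact Finset.disjoint_left.1 hdisj
      (this _ (hstrong (x 0) (by simp [hV, x_mem]) (y 0) (by simp [hV, y_mem]))) (y_mem 0)
  have hF : ∃ t, ¬ F t := by
    by_contra! hc
    have : ∀ v, Relation.ReflTransGen D.Arc (y 0) v → v ∈ D2.verts := by
      intro v hv
      induction hv with
      | refl => exact y_mem 0
      | @tail b c _ hbc ih =>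
        have hcV := D.arc_mem_right hbc
        rw [hV, Finset.mem_union] at hcV
        refine hcV.resolve_left fun hc1 => ?_
        obtain ⟨i, rfl⟩ := hx.2 _ hc1
        obtain ⟨j, rfl⟩ := hy.2 _ ih
        obtain ⟨i, rfl⟩ := ZMod.intCast_surjective i
        obtain ⟨j, rfl⟩ := ZMod.intCast_surjective j
        have hij := (diag i j).2 (hc _)
        rcases hX _ _ (x_mem i) (y_mem j) with h | h
        · exact h.2 hbc
        · exact h.2 hij
    exact Finset.disjoint_left.1 hdisj (x_mem 0)
      (this _ (hstrong (y 0) (by simp [hV, y_mem]) (x 0) (by simp [hV, x_mem])))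
  refine ⟨by omega, fun v hv k hk3 hk => ?_⟩
  obtain ⟨t, ht⟩ := hP.exists_cycle hn hm hT hF hk3 (hcard ▸ hk)
  rw [hV, Finset.mem_union] at hv
  rcases hv with hv | hv
  · obtain ⟨i, rfl⟩ := hx.2 _ hv
    obtain ⟨i, rfl⟩ := ZMod.intCast_surjective i
    exact ht i (t - i) (by ring) _ (Or.inl rfl)
  · obtain ⟨j, rfl⟩ := hy.2 _ hv
    obtain ⟨j, rfl⟩ := ZMod.intCast_surjective j
    exact ht (t - j) j (by ring) _ (Or.inr rfl)
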